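/- arXiv:1812.10269 — 2 statements merged into one kernel-verified Lean document; each statement's English description precedes it below -/
import Mathlib

section
/- (Guth–Katz polynomial partitioning for points.) For every positive integer d there is a constant C_d such that the following holds: given a set of n points in ℝ^d and an integer D ≥ 1, there exists a nonzero d-variate real polynomial P of degree at most D such that each connected component of ℝ^d \ Z(P) contains at most C_d·n/D^d points of the set. -/
open MvPolynomial

/-!
The topological input is the Borsuk–Ulam theorem, proved here algebraically. If `D` is odd and
`H₁, …, Hₙ` are real polynomials in `n` variables of degree at most `D`, then for all but countably
many `ε` the algebra `ℝ[X] / (Xᵢ ^ D - ε Hᵢ)` has dimension `D ^ n`, as it does at `ε = 0`. This is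
odd, so the algebra has `ℝ` as a quotient and the system `Xᵢ ^ D = ε Hᵢ` has a real solution.
Letting `ε → ∞`, homogeneous polynomials `f₁, …, fₙ` of degree `D` in `n + 1` variables have a
common zero on the sphere; Stone–Weierstrass passes to continuous functions.

Borsuk–Ulam bisects any `N` finite sets simultaneously by the zero set of a polynomial taken from a
space of dimension greater than `N`, hence of degree `O(N ^ (1 / d))`. Bisecting all the cells
again and again, starting from the given set, produces `2 ^ j` cells after `j` steps, and the
degrees add up to a geometric sum that is `O(2 ^ (j / d))`.
-/

section OddDimension

open Module

variable {K A M : Type*} [Field K] [CommRing A] [Algebra K A] [AddCommGroup M] [Module K M]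
  [Module A M] [IsScalarTower K A M] [Module.Finite K M]

theorem finrank_quotient_add_finrank_of_isScalarTower (N : Submodule A M) :
    finrank K (M ⧸ N) + finrank K N = finrank K M := by
  rw [← (Submodule.Quotient.restrictScalarsEquiv K N).finrank_eq]
  exact Submodule.finrank_quotient_add_finrank (N.restrictScalars K)

/- A minimal submodule of odd dimension has a simple quotient of odd dimension. -/
theorem exists_isMaximal_odd_finrank_quotient (hM : Odd (finrank K M)) :
    ∃ m : Ideal A, m.IsMaximal ∧ Odd (finrank K (A ⧸ m)) := by
  have : IsArtinian A M := isArtinian_of_tower K inferInstance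
  have : IsNoetherian A M := isNoetherian_of_tower K inferInstance
  obtain ⟨N, odd_N, N_minimal⟩ := exists_minimal_of_wellFoundedLT
    (fun N : Submodule A M => Odd (finrank K N)) ⟨⊤, by
      rwa [((Submodule.topEquiv (R := A) (M := M)).restrictScalars K).finrank_eq]⟩
  have : Module.Finite K N := inferInstanceAs (Module.Finite K (N.restrictScalars K))
  have : Nontrivial N := nontrivial_of_finrank_pos odd_N.pos
  obtain ⟨N', hN'⟩ := IsCoatomic.exists_coatom (Submodule A N)
  have even_N' : Even (finrank K N') := by
    rw [← Nat.not_odd_iff_even]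
    intro odd_N'
    have odd_map : Odd (finrank K (N'.map N.subtype)) := by
      rwa [← ((Submodule.equivMapOfInjective N.subtype N.subtype_injective N').restrictScalars
        K).finrank_eq]
    have map_eq : N'.map N.subtype = N :=
      (Submodule.map_subtype_le N N').antisymm
        (N_minimal odd_map (Submodule.map_subtype_le N N'))
    exact hN'.1 (Submodule.map_injective_of_injective N.subtype_injective
      (map_eq.trans (Submodule.map_subtype_top N).symm))
  obtain ⟨m, hm, ⟨e⟩⟩ := isSimpleModule_iff_quot_maximal.mp (isSimpleModule_iff_isCoatom.mpr hN')
  refine ⟨m, hm, ?_⟩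
  rw [← (e.restrictScalars K).finrank_eq]
  rw [← finrank_quotient_add_finrank_of_isScalarTower N'] at odd_N
  exact (Nat.odd_add.mp odd_N).mpr even_N'

theorem nonempty_algHom_real_of_odd_finrank {A : Type*} [CommRing A] [Algebra ℝ A]
    (hA : Odd (finrank ℝ A)) : Nonempty (A →ₐ[ℝ] ℝ) := by
  have : Module.Finite ℝ A := finite_of_finrank_pos hA.pos
  obtain ⟨m, hm, hodd⟩ := exists_isMaximal_odd_finrank_quotient (K := ℝ) (A := A) hA
  let : Field (A ⧸ m) := Ideal.Quotient.field m
  rcases Real.nonempty_algEquiv_or (A ⧸ m) with ⟨⟨e⟩⟩ | ⟨⟨e⟩⟩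
  · exact ⟨e.toAlgHom.comp (Ideal.Quotient.mkₐ ℝ m)⟩
  · rw [e.toLinearEquiv.finrank_eq, Complex.finrank_real_complex] at hodd
    exact absurd hodd (by decide)

theorem exists_forall_eval_eq_zero_of_odd_finrank_quotient {σ ι : Type*}
    (G : ι → MvPolynomial σ ℝ)
    (hG : Odd (finrank ℝ (MvPolynomial σ ℝ ⧸ Ideal.span (Set.range G)))) :
    ∃ x : σ → ℝ, ∀ i, eval x (G i) = 0 := by
  obtain ⟨φ⟩ := nonempty_algHom_real_of_odd_finrank hG
  let ψ := φ.comp (Ideal.Quotient.mkₐ ℝ (Ideal.span (Set.range G)))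
  refine ⟨fun i => ψ (X i), fun i => ?_⟩
  calc eval (fun i => ψ (X i)) (G i) = ψ (G i) := by
        rw [← aeval_eq_eval]
        exact (DFunLike.congr_fun (aeval_unique ψ) (G i)).symm
    _ = φ 0 := congrArg φ (Ideal.Quotient.eq_zero_iff_mem.mpr (Ideal.subset_span ⟨i, rfl⟩))
    _ = 0 := map_zero φ

end OddDimension

theorem finrank_quotient_span_image_compl {ι R M : Type*} [CommRing R] [Nontrivial R]
    [AddCommGroup M] [Module R M] (b : Module.Basis ι R M) (s : Set ι) :
    Module.finrank R (M ⧸ Submodule.span R (b '' sᶜ)) = Nat.card s := by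
  classical
  let restrict : M →ₗ[R] (s →₀ R) := Finsupp.lsubtypeDomain (R := R) s ∘ₗ b.repr.toLinearMap
  have restrict_surjective : Function.Surjective restrict := fun f =>
    ⟨b.repr.symm f.extendDomain, by simp [restrict, Finsupp.lsubtypeDomain_apply]⟩
  have ker_restrict : LinearMap.ker restrict = Submodule.span R (b '' sᶜ) := by
    ext v
    simp [restrict, Finsupp.lsubtypeDomain_apply, b.mem_span_image, Set.subset_def, Finsupp.ext_iff,
      not_imp_not]
  rw [← ker_restrict]
  exact Module.finrank_eq_nat_card_basis
    (.ofRepr (restrict.quotKerEquivOfSurjective restrict_surjective))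

theorem natCard_setOf_forall_lt (σ : Type*) [Fintype σ] (D : ℕ) :
    Nat.card {m : σ →₀ ℕ | ∀ i, m i < D} = D ^ Fintype.card σ := by
  let e : {m : σ →₀ ℕ | ∀ i, m i < D} ≃ (σ → Fin D) :=
    (Finsupp.equivFunOnFinite.subtypeEquiv fun _ => Iff.rfl).trans
      (Equiv.subtypePiEquivPi.trans (Equiv.piCongrRight fun _ => Fin.equivSubtype.symm))
  rw [Nat.card_congr e, Nat.card_fun, Nat.card_eq_fintype_card, Nat.card_eq_fintype_card,
    Fintype.card_fin]

section ReplacedMonomial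

variable {σ R S : Type*} [Fintype σ] [CommRing R] [CommRing S]

/-- The monomial `X ^ m` with every factor `X i ^ D` replaced by `G i`. When the `G i` have degree
at most `D` and are close to the `X i ^ D`, these form a basis of the polynomial ring, in which the
ideal generated by the `G i` is spanned by the basis vectors with some exponent `m i ≥ D`. -/
noncomputable def replacedMonomial (D : ℕ) (G : σ → MvPolynomial σ R) (m : σ →₀ ℕ) :
    MvPolynomial σ R :=
  ∏ i, X i ^ (m i % D) * G i ^ (m i / D)

theorem map_replacedMonomial (f : R →+* S) (D : ℕ) (G : σ → MvPolynomial σ R) (m : σ →₀ ℕ) :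
    map f (replacedMonomial D G m) = replacedMonomial D (fun i => map f (G i)) m := by
  simp [replacedMonomial]

theorem replacedMonomial_X_pow (D : ℕ) (m : σ →₀ ℕ) :
    replacedMonomial D (fun i => (X i : MvPolynomial σ R) ^ D) m = monomial m 1 := by
  simp [replacedMonomial, ← pow_mul, ← pow_add, Nat.mod_add_div, monomial_eq,
    Finsupp.prod_fintype]

theorem totalDegree_replacedMonomial_le [Nontrivial R] {D : ℕ} {G : σ → MvPolynomial σ R}
    (hG : ∀ i, (G i).totalDegree ≤ D) (m : σ →₀ ℕ) :
    (replacedMonomial D G m).totalDegree ≤ m.degree := by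
  rw [Finsupp.degree_eq_sum]
  refine (totalDegree_finsetProd _ _).trans (Finset.sum_le_sum fun i _ => ?_)
  calc (X i ^ (m i % D) * G i ^ (m i / D)).totalDegree
      ≤ m i % D + m i / D * (G i).totalDegree := by
        refine (totalDegree_mul _ _).trans (add_le_add (totalDegree_X_pow i _).le ?_)
        exact totalDegree_pow _ _
    _ ≤ m i % D + m i / D * D := by gcongr; exact hG i
    _ = m i := Nat.mod_add_div' _ _

theorem replacedMonomial_add_single {D : ℕ} (hD : 0 < D) (G : σ → MvPolynomial σ R) (m : σ →₀ ℕ)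
    (i : σ) :
    replacedMonomial D G (m + Finsupp.single i D) = replacedMonomial D G m * G i := by
  classical
  have factor (j : σ) : X j ^ ((m + Finsupp.single i D) j % D) *
      G j ^ ((m + Finsupp.single i D) j / D) =
        X j ^ (m j % D) * G j ^ (m j / D) * if j = i then G i else 1 := by
    rcases eq_or_ne j i with rfl | hj
    · simp [Nat.add_div_right _ hD, pow_succ, mul_assoc]
    · simp [hj]
  rw [replacedMonomial, Finset.prod_congr rfl fun j _ => factor j, Finset.prod_mul_distrib,
    Finset.prod_ite_eq', if_pos (Finset.mem_univ i), replacedMonomial]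

theorem restrictScalars_span_range_eq_span_replacedMonomial {D : ℕ} (hD : 0 < D)
    (G : σ → MvPolynomial σ R)
    (hspan : Submodule.span R (Set.range (replacedMonomial D G)) = ⊤) :
    (Ideal.span (Set.range G)).restrictScalars R =
      Submodule.span R (replacedMonomial D G '' {m | ∀ i, m i < D}ᶜ) := by
  apply le_antisymm
  · have mul_mem (f : MvPolynomial σ R) (i : σ) :
        f * G i ∈ Submodule.span R (replacedMonomial D G '' {m | ∀ i, m i < D}ᶜ) := by
      have hf : f ∈ Submodule.span R (Set.range (replacedMonomial D G)) := hspan ▸ trivial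
      induction hf using Submodule.span_induction with
      | mem _ h =>
        obtain ⟨m, rfl⟩ := h
        rw [← replacedMonomial_add_single hD]
        exact Submodule.subset_span ⟨_, by simpa using ⟨i, by simp⟩, rfl⟩
      | zero => simp
      | add f g _ _ hf hg => simpa only [add_mul] using add_mem hf hg
      | smul c f _ hf => simpa only [smul_mul_assoc] using Submodule.smul_mem _ c hf
    intro f hf
    obtain ⟨c, rfl⟩ := Ideal.mem_span_range_iff_exists_fun.mp hf
    exact Submodule.sum_mem _ fun i _ => mul_mem (c i) i
  · rw [Submodule.span_le]
    rintro _ ⟨m, hm, rfl⟩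
    obtain ⟨i, hi⟩ : ∃ i, D ≤ m i := by simpa using hm
    obtain ⟨k, rfl⟩ : ∃ k, m = k + Finsupp.single i D :=
      ⟨m - Finsupp.single i D, (tsub_add_cancel_of_le (by simpa using hi)).symm⟩
    rw [replacedMonomial_add_single hD]
    exact Ideal.mul_mem_left _ _ (Ideal.subset_span ⟨i, rfl⟩)

end ReplacedMonomial

section GenericIndependence

variable {σ K : Type*} [Field K]

theorem span_range_eq_top_of_totalDegree_le_degree [Finite σ]
    {v : (σ →₀ ℕ) → MvPolynomial σ K} (hv : LinearIndependent K v)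
    (hdeg : ∀ m, (v m).totalDegree ≤ m.degree) : Submodule.span K (Set.range v) = ⊤ := by
  refine (Submodule.eq_top_iff'.mpr fun p => ?_)
  let s : Set (σ →₀ ℕ) := {m | m.degree ≤ p.totalDegree}
  have : Fintype s := (Finsupp.finite_of_degree_le p.totalDegree).fintype
  let b : Module.Basis s K (restrictTotalDegree σ K p.totalDegree) := basisRestrictSupport K s
  have : Module.Finite K (restrictTotalDegree σ K p.totalDegree) := .of_basis b
  have span_le : Submodule.span K (Set.range (v ∘ Subtype.val : s → _)) ≤
      restrictTotalDegree σ K p.totalDegree := by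
    rw [Submodule.span_le]
    rintro _ ⟨m, rfl⟩
    exact (mem_restrictTotalDegree _ _ _).mpr ((hdeg m).trans m.2)
  have span_eq := Submodule.eq_of_le_of_finrank_eq span_le <| by
    rw [finrank_span_eq_card (hv.comp _ Subtype.val_injective), Module.finrank_eq_card_basis b]
  have hp : p ∈ restrictTotalDegree σ K p.totalDegree := (mem_restrictTotalDegree _ _ _).mpr le_rfl
  rw [← span_eq] at hp
  exact Submodule.span_mono (Set.range_comp_subset_range _ v) hp

theorem finrank_quotient_span_range_of_linearIndependent [Fintype σ] {D : ℕ} (hD : 0 < D)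
    {G : σ → MvPolynomial σ K} (hG : ∀ i, (G i).totalDegree ≤ D)
    (hind : LinearIndependent K (replacedMonomial D G)) :
    Module.finrank K (MvPolynomial σ K ⧸ Ideal.span (Set.range G)) = D ^ Fintype.card σ := by
  have hspan := span_range_eq_top_of_totalDegree_le_degree hind (totalDegree_replacedMonomial_le hG)
  let b := Module.Basis.mk hind hspan.ge
  have key := finrank_quotient_span_image_compl b {m | ∀ i, m i < D}
  rw [Module.Basis.coe_mk, ← restrictScalars_span_range_eq_span_replacedMonomial hD G hspan,
    (Submodule.Quotient.restrictScalarsEquiv K _).finrank_eq] at key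
  rw [key, natCard_setOf_forall_lt]

/- Each finite family of exponents gives a minor of the coefficient matrix, a polynomial in `ε`
which is `1` at `ε = 0`. -/
theorem countable_setOf_not_linearIndependent_map_eval
    [Countable σ] {v : (σ →₀ ℕ) → MvPolynomial σ (Polynomial K)}
    (hv : ∀ m, map (Polynomial.evalRingHom 0) (v m) = monomial m 1) :
    {ε : K | ¬ LinearIndependent K fun m => map (Polynomial.evalRingHom ε) (v m)}.Countable := by
  classical
  let minor (s : Finset (σ →₀ ℕ)) : Polynomial K :=
    (Matrix.of fun a b : s => coeff a.1 (v b.1)).det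
  have eval_minor (s : Finset (σ →₀ ℕ)) (ε : K) : (minor s).eval ε =
      (Matrix.of fun a b : s => coeff a.1 (map (Polynomial.evalRingHom ε) (v b.1))).det := by
    rw [← Polynomial.coe_evalRingHom, RingHom.map_det]
    simp only [coeff_map]
    rfl
  have minor_ne_zero (s : Finset (σ →₀ ℕ)) : minor s ≠ 0 := by
    intro h
    have coeff_eq_one : (Matrix.of fun a b : s =>
        coeff a.1 (map (Polynomial.evalRingHom 0) (v b.1))) = (1 : Matrix s s K) := by
      ext a b
      simp [hv, coeff_monomial, Matrix.one_apply, eq_comm]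
    simpa [h, coeff_eq_one] using eval_minor s 0
  have linearIndependent (ε : K) (hε : ∀ s, (minor s).eval ε ≠ 0) :
      LinearIndependent K fun m => map (Polynomial.evalRingHom ε) (v m) := by
    rw [linearIndependent_iff_finset_linearIndependent]
    intro s
    have := Matrix.linearIndependent_cols_of_det_ne_zero ((eval_minor s ε).symm.trans_ne (hε s))
    exact LinearIndependent.of_comp (LinearMap.pi fun a : s => lcoeff K a.1) this
  refine (Set.countable_iUnion fun s =>
    (Polynomial.finite_setOfPred_isRoot (minor_ne_zero s)).countable).mono fun ε hε => ?_
  contrapose! hε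
  simpa using linearIndependent ε (by simpa using hε)

end GenericIndependence

theorem countable_setOf_not_linearIndependent_replacedMonomial {σ K : Type*} [Fintype σ] [Field K]
    (D : ℕ) (H : σ → MvPolynomial σ K) :
    {ε : K | ¬ LinearIndependent K
      (replacedMonomial D fun i => X i ^ D - C ε * H i)}.Countable := by
  let G (i : σ) : MvPolynomial σ (Polynomial K) :=
    X i ^ D - C Polynomial.X * map Polynomial.C (H i)
  have map_G (ε : K) (i : σ) :
      map (Polynomial.evalRingHom ε) (G i) = X i ^ D - C ε * H i := by
    have : (Polynomial.evalRingHom ε).comp Polynomial.C = RingHom.id K := by ext; simp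
    simp [G, map_map, this, map_id]
  simpa [map_replacedMonomial, map_G] using
    countable_setOf_not_linearIndependent_map_eval (v := replacedMonomial D G) fun m => by
      simpa [map_replacedMonomial, map_G] using replacedMonomial_X_pow D m

theorem countable_setOf_not_exists_pow_eq_mul_eval {σ : Type*} [Finite σ] {D : ℕ} (hD : Odd D)
    {H : σ → MvPolynomial σ ℝ} (hH : ∀ i, (H i).totalDegree ≤ D) :
    {ε : ℝ | ¬ ∃ x : σ → ℝ, ∀ i, x i ^ D = ε * eval x (H i)}.Countable := by
  have := Fintype.ofFinite σ
  refine (countable_setOf_not_linearIndependent_replacedMonomial D H).mono fun ε =>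
    mt fun hind => ?_
  have deg_le (i : σ) : (X i ^ D - C ε * H i).totalDegree ≤ D := by
    refine (totalDegree_sub _ _).trans (max_le (totalDegree_X_pow i D).le ?_)
    simpa using (totalDegree_mul _ _).trans (add_le_add (totalDegree_C ε).le (hH i))
  obtain ⟨x, hx⟩ := exists_forall_eval_eq_zero_of_odd_finrank_quotient _
    (finrank_quotient_span_range_of_linearIndependent hD.pos deg_le hind ▸ hD.pow)
  exact ⟨x, fun i => sub_eq_zero.mp (by simpa using hx i)⟩

theorem eval_smul_of_isHomogeneous {σ R : Type*} [CommSemiring R] {f : MvPolynomial σ R} {D : ℕ}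
    (hf : f.IsHomogeneous D) (c : R) (y : σ → R) : eval (c • y) f = c ^ D * eval y f := by
  rw [eval_eq, eval_eq, Finset.mul_sum]
  refine Finset.sum_congr rfl fun m hm => ?_
  simp only [Pi.smul_apply, smul_eq_mul, mul_pow, Finset.prod_mul_distrib,
    Finset.prod_pow_eq_pow_sum, hf.degree_eq_sum_deg_support hm, mul_left_comm]

theorem totalDegree_aeval_le {σ τ R : Type*} [CommSemiring R] {g : σ → MvPolynomial τ R}
    (hg : ∀ i, (g i).totalDegree ≤ 1) (f : MvPolynomial σ R) :
    (aeval g f).totalDegree ≤ f.totalDegree := by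
  rw [aeval_def, eval₂_eq]
  refine totalDegree_finsetSum_le fun m hm => ?_
  calc (algebraMap R (MvPolynomial τ R) (coeff m f) * ∏ i ∈ m.support, g i ^ m i).totalDegree
      ≤ ∑ i ∈ m.support, (g i ^ m i).totalDegree := by
        refine (totalDegree_mul _ _).trans ?_
        rw [algebraMap_eq, totalDegree_C, zero_add]
        exact totalDegree_finsetProd _ _
    _ ≤ ∑ i ∈ m.support, m i := Finset.sum_le_sum fun i _ =>
        (totalDegree_pow _ _).trans (mul_le_of_le_one_right' (hg i))
    _ ≤ f.totalDegree := le_totalDegree hm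

theorem exists_eq_zero_of_forall_exists_norm_le {X E : Type*} [TopologicalSpace X] [CompactSpace X]
    [NormedAddCommGroup E] {g : X → E} (hg : Continuous g)
    (h : ∀ δ > 0, ∃ x, ‖g x‖ ≤ δ) : ∃ x, g x = 0 := by
  obtain ⟨x₀, -⟩ := h 1 one_pos
  obtain ⟨x, -, hx⟩ := isCompact_univ.exists_isMinOn ⟨x₀, trivial⟩ hg.norm.continuousOn
  refine ⟨x, norm_le_zero_iff.mp (le_of_forall_pos_le_add fun δ hδ => ?_)⟩
  obtain ⟨x', hx'⟩ := h δ hδ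
  simpa using (hx (Set.mem_univ x')).trans hx'

theorem exists_eval_near_of_separatesPoints {ι Y : Type*} [TopologicalSpace Y] [CompactSpace Y]
    {g : ι → Y → ℝ} (hg : ∀ i, Continuous (g i)) (hsep : ∀ x y, (∀ i, g i x = g i y) → x = y)
    {f : Y → ℝ} (hf : Continuous f) {ε : ℝ} (hε : 0 < ε) :
    ∃ p : MvPolynomial ι ℝ, ∀ x, |eval (fun i => g i x) p - f x| < ε := by
  let φ : MvPolynomial ι ℝ →ₐ[ℝ] C(Y, ℝ) := aeval fun i => ⟨g i, hg i⟩
  have φ_apply (p : MvPolynomial ι ℝ) (x : Y) : φ p x = eval (fun i => g i x) p := by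
    induction p using MvPolynomial.induction_on <;> simp_all [φ]
  have separates : φ.range.SeparatesPoints := by
    intro x y hxy
    obtain ⟨i, hi⟩ := not_forall.mp (mt (hsep x y) hxy)
    exact ⟨g i, ⟨⟨g i, hg i⟩, ⟨X i, by simp [φ]⟩, rfl⟩, hi⟩
  obtain ⟨⟨_, p, rfl⟩, hp⟩ :=
    ContinuousMap.exists_mem_subalgebra_near_continuous_of_separatesPoints _ separates f hf ε hε
  exact ⟨p, fun x => by simpa [← φ_apply] using hp x⟩

section BorsukUlam

open Metric

variable {n : ℕ}

theorem exists_sphere_abs_eval_le_of_isHomogeneous {D : ℕ} (hD : Odd D)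
    {f : Fin n → MvPolynomial (Fin (n + 1)) ℝ} (hf : ∀ i, (f i).IsHomogeneous D)
    {δ : ℝ} (hδ : 0 < δ) :
    ∃ y : sphere (0 : EuclideanSpace ℝ (Fin (n + 1))) 1, ∀ i, |eval y.1.ofLp (f i)| ≤ δ := by
  let H (i : Fin n) : MvPolynomial (Fin n) ℝ := aeval (Fin.cons 1 X) (f i)
  have eval_H (x : Fin n → ℝ) (i : Fin n) : eval x (H i) = eval (Fin.cons 1 x) (f i) := by
    rw [← aeval_eq_eval, ← aeval_eq_eval, ← AlgHom.comp_apply, comp_aeval]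
    congr
    ext j
    refine Fin.cases ?_ ?_ j <;> simp
  have deg_H (i : Fin n) : (H i).totalDegree ≤ D :=
    (totalDegree_aeval_le (Fin.cases (by simp) fun j => by simp) (f i)).trans (hf i).totalDegree_le
  obtain ⟨ε, hε, δ_lt⟩ :=
    ((countable_setOf_not_exists_pow_eq_mul_eval hD deg_H).dense_compl ℝ).exists_gt δ⁻¹
  obtain ⟨x, hx⟩ := not_not.mp hε
  let z : EuclideanSpace ℝ (Fin (n + 1)) := WithLp.toLp 2 (Fin.cons 1 x)
  have one_le : 1 ≤ ‖z‖ := by simpa [z] using PiLp.norm_apply_le z 0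
  have norm_pos : 0 < ‖z‖ := one_pos.trans_le one_le
  have ε_pos : 0 < ε := (inv_pos.mpr hδ).trans δ_lt
  refine ⟨⟨‖z‖⁻¹ • z, by simp [norm_smul, norm_pos.ne']⟩, fun i => ?_⟩
  have abs_x_le : |x i| ≤ ‖z‖ := by simpa [z] using PiLp.norm_apply_le z i.succ
  have f_z : eval z.ofLp (f i) = x i ^ D / ε := by
    rw [eq_div_iff ε_pos.ne', hx i, eval_H, mul_comm]
  calc |eval (‖z‖⁻¹ • z.ofLp) (f i)| = (|x i| / ‖z‖) ^ D * ε⁻¹ := by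
        rw [eval_smul_of_isHomogeneous (hf i), f_z, abs_mul, abs_div, abs_pow, abs_pow, abs_inv,
          abs_norm, abs_of_pos ε_pos]
        ring
    _ ≤ 1 * ε⁻¹ := by
        gcongr
        exact pow_le_one₀ (by positivity) ((div_le_one norm_pos).mpr abs_x_le)
    _ ≤ δ := by simpa using (inv_lt_of_inv_lt₀ hδ δ_lt).le

theorem eval_sub_eval_neg_eq_sum_odd_homogeneousComponent {σ R : Type*} [CommRing R]
    {p : MvPolynomial σ R} {M : ℕ} (hp : p.totalDegree ≤ M) (y : σ → R) :
    eval y p - eval (-y) p =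
      2 * ∑ j ∈ Finset.range (M + 1) with Odd j, eval y (homogeneousComponent j p) := by
  have sum_components : ∑ j ∈ Finset.range (M + 1), homogeneousComponent j p = p := by
    conv_rhs => rw [← sum_homogeneousComponent p]
    refine (Finset.sum_subset (Finset.range_mono (Nat.succ_le_succ hp)) fun j _ hj => ?_).symm
    exact homogeneousComponent_eq_zero j p (by simpa using hj)
  have eval_neg (j : ℕ) : eval (-y) (homogeneousComponent j p) =
      (-1) ^ j * eval y (homogeneousComponent j p) := by
    rw [← eval_smul_of_isHomogeneous (homogeneousComponent_isHomogeneous j p), neg_one_smul]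
  conv_lhs => rw [← sum_components]
  rw [map_sum, map_sum, ← Finset.sum_sub_distrib, Finset.sum_filter, Finset.mul_sum]
  refine Finset.sum_congr rfl fun j _ => ?_
  rw [eval_neg]
  split_ifs with hj
  · rw [hj.neg_one_pow]
    ring
  · rw [(Nat.not_odd_iff_even.mp hj).neg_one_pow]
    ring

/- Multiplying the odd homogeneous components by powers of `∑ i, X i ^ 2`, which is `1` on the
sphere, makes their sum homogeneous. -/
theorem exists_isHomogeneous_eq_odd_part {ι : Type*} [Fintype ι] (p : MvPolynomial ι ℝ) {M : ℕ}
    (hM : Odd M) (hp : p.totalDegree ≤ M) :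
    ∃ q : MvPolynomial ι ℝ, q.IsHomogeneous M ∧ ∀ y : EuclideanSpace ℝ ι, ‖y‖ = 1 →
      2 * eval y.ofLp q = eval y.ofLp p - eval (-y).ofLp p := by
  let r : MvPolynomial ι ℝ := ∑ i, X i ^ 2
  have hr : r.IsHomogeneous 2 := IsHomogeneous.sum _ _ _ fun i _ => isHomogeneous_X_pow i 2
  refine ⟨∑ j ∈ Finset.range (M + 1) with Odd j, homogeneousComponent j p * r ^ ((M - j) / 2),
    IsHomogeneous.sum _ _ _ fun j hj => ?_, fun y hy => ?_⟩
  · have hj : j < M + 1 ∧ Odd j := by simpa using hj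
    have : j + 2 * ((M - j) / 2) = M := by grind
    simpa only [this] using (homogeneousComponent_isHomogeneous j p).mul (hr.pow ((M - j) / 2))
  · have eval_r : eval y.ofLp r = 1 := by simp [r, ← EuclideanSpace.real_norm_sq_eq, hy]
    simp [eval_sub_eval_neg_eq_sum_odd_homogeneousComponent hp, eval_r]

theorem exists_sphere_eval_neg_eq (p : Fin n → MvPolynomial (Fin (n + 1)) ℝ) :
    ∃ y : sphere (0 : EuclideanSpace ℝ (Fin (n + 1))) 1,
      ∀ i, eval (-y).1.ofLp (p i) = eval y.1.ofLp (p i) := by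
  let M := 2 * (∑ i, (p i).totalDegree) + 1
  have deg_le (i : Fin n) : (p i).totalDegree ≤ M := by
    have := Finset.single_le_sum (f := fun i => (p i).totalDegree) (fun _ _ => Nat.zero_le _)
      (Finset.mem_univ i)
    grind
  have odd_M : Odd M := odd_two_mul_add_one _
  choose q hq hqp using fun i => exists_isHomogeneous_eq_odd_part (p i) odd_M (deg_le i)
  obtain ⟨y, hy⟩ := exists_eq_zero_of_forall_exists_norm_le
    (X := sphere (0 : EuclideanSpace ℝ (Fin (n + 1))) 1) (g := fun y i => eval y.1.ofLp (q i))
    (continuous_pi fun i => (continuous_eval (q i)).comp (by fun_prop)) fun δ hδ => by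
      simpa [pi_norm_le_iff_of_nonneg hδ.le] using
        exists_sphere_abs_eval_le_of_isHomogeneous odd_M hq hδ
  refine ⟨y, fun i => ?_⟩
  have h := hqp i y (by simp)
  rw [congrFun hy i, Pi.zero_apply, mul_zero] at h
  exact (sub_eq_zero.mp h.symm).symm

theorem borsuk_ulam {f : sphere (0 : EuclideanSpace ℝ (Fin (n + 1))) 1 → Fin n → ℝ}
    (hf : Continuous f) : ∃ y, f (-y) = f y := by
  suffices ∃ y, f (-y) - f y = 0 from this.imp fun _ => sub_eq_zero.mp
  refine exists_eq_zero_of_forall_exists_norm_le (by fun_prop) fun δ hδ => ?_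
  have separates (x y : sphere (0 : EuclideanSpace ℝ (Fin (n + 1))) 1)
      (h : ∀ i, x.1.ofLp i = y.1.ofLp i) : x = y := Subtype.ext (PiLp.ext h)
  choose p hp using fun i => exists_eval_near_of_separatesPoints
    (fun i => by fun_prop) separates (continuous_apply i |>.comp hf) (half_pos hδ)
  obtain ⟨y, hy⟩ := exists_sphere_eval_neg_eq p
  refine ⟨y, (pi_norm_le_iff_of_nonneg hδ.le).mpr fun i => ?_⟩
  have near_neg : |eval (-y).1.ofLp (p i) - f (-y) i| < δ / 2 := hp i (-y)
  have near : |eval y.1.ofLp (p i) - f y i| < δ / 2 := hp i y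
  rw [hy i, abs_sub_comm] at near_neg
  have := abs_sub_le (f (-y) i) (eval y.1.ofLp (p i)) (f y i)
  rw [Pi.sub_apply, Real.norm_eq_abs]
  linarith

end BorsukUlam

section HamSandwich

open Filter Finset Metric Module

theorem exists_sphere_eq_zero_of_odd {κ : Type*} [Fintype κ]
    {f : sphere (0 : EuclideanSpace ℝ (Fin (Fintype.card κ + 1))) 1 → κ → ℝ}
    (hf : Continuous f) (hodd : ∀ y, f (-y) = -f y) : ∃ y, f y = 0 := by
  let e := Fintype.equivFin κ
  obtain ⟨y, hy⟩ := borsuk_ulam (f := fun y i => f y (e.symm i)) (by fun_prop)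
  refine ⟨y, funext fun i => self_eq_neg.mp ?_⟩
  simpa [hodd] using (congrFun hy (e i)).symm

theorem two_mul_card_filter_le_of_sum_arctan_eq_zero {α ι : Type*} {l : Filter α} [l.NeBot]
    {S : Finset ι} {p : ι → Prop} [DecidablePred p] {u : α → ι → ℝ}
    (hsum : ∀ k, ∑ x ∈ S, Real.arctan (u k x) = 0)
    (hu : ∀ x ∈ S, p x → Tendsto (u · x) l atTop) : 2 * #{x ∈ S | p x} ≤ #S := by
  have sum_not_ge (k : α) :
      -(#{x ∈ S | ¬ p x} * (Real.pi / 2)) ≤ ∑ x ∈ S with ¬ p x, Real.arctan (u k x) := by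
    rw [← nsmul_eq_mul, ← smul_neg]
    exact card_nsmul_le_sum _ _ _ fun x _ => (Real.neg_pi_div_two_lt_arctan _).le
  have sum_tendsto : Tendsto (fun k => ∑ x ∈ S with p x, Real.arctan (u k x)) l
      (nhds (#{x ∈ S | p x} * (Real.pi / 2))) := by
    rw [← nsmul_eq_mul, ← sum_const]
    refine tendsto_finsetSum _ fun x hx => ?_
    obtain ⟨hxS, hpx⟩ := mem_filter.mp hx
    exact (Real.tendsto_arctan_atTop.mono_right nhdsWithin_le_nhds).comp (hu x hxS hpx)
  have card_le : (#{x ∈ S | p x} * (Real.pi / 2) : ℝ) ≤ #{x ∈ S | ¬ p x} * (Real.pi / 2) := by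
    refine le_of_tendsto sum_tendsto (Eventually.of_forall fun k => ?_)
    have := hsum k
    rw [← sum_filter_add_sum_filter_not S p] at this
    linarith [sum_not_ge k]
  have : #{x ∈ S | p x} ≤ #{x ∈ S | ¬ p x} := by
    exact_mod_cast le_of_mul_le_mul_right card_le (by positivity)
  have := card_filter_add_card_filter_not (s := S) p
  lia

/- Borsuk–Ulam applied to the sums of `arctan (k * φ x w)` over the sets `S i`; as `k → ∞` these
tend to `π / 2` times the difference of the numbers of points on the two sides. -/
theorem exists_ne_zero_forall_two_mul_card_filter_le {ι κ V : Type*} [Fintype κ] [AddCommGroup V]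
    [Module ℝ V] (hV : Fintype.card κ < finrank ℝ V) (φ : ι → V →ₗ[ℝ] ℝ) (S : κ → Finset ι) :
    ∃ w ≠ 0, ∀ i, 2 * #{x ∈ S i | 0 < φ x w} ≤ #(S i) ∧ 2 * #{x ∈ S i | φ x w < 0} ≤ #(S i) := by
  obtain ⟨v, hv⟩ := exists_linearIndependent_of_le_finrank hV
  let L : EuclideanSpace ℝ (Fin (Fintype.card κ + 1)) →ₗ[ℝ] V :=
    Fintype.linearCombination ℝ v ∘ₗ (WithLp.linearEquiv 2 ℝ _).toLinearMap
  have continuous_L (ψ : V →ₗ[ℝ] ℝ) : Continuous fun y => ψ (L y) :=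
    (ψ ∘ₗ L).continuous_of_finiteDimensional
  have exists_zero (k : ℕ) : ∃ y : sphere (0 : EuclideanSpace ℝ (Fin (Fintype.card κ + 1))) 1,
      (fun i => ∑ x ∈ S i, Real.arctan (k * φ x (L y))) = 0 := by
    refine exists_sphere_eq_zero_of_odd ?_ fun y => ?_
    · refine continuous_pi fun i => continuous_finsetSum _ fun x _ => Real.continuous_arctan.comp ?_
      exact continuous_const.mul ((continuous_L (φ x)).comp continuous_subtype_val)
    · ext i
      simp [Real.arctan_neg]
  choose y hy using exists_zero
  obtain ⟨y₀, θ, hθ, hlim⟩ := CompactSpace.tendsto_subseq y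
  have two_mul_card_le (ψ : ι → V →ₗ[ℝ] ℝ) (i : κ)
      (hψ : ∀ k : ℕ, ∑ x ∈ S i, Real.arctan (k * ψ x (L (y k))) = 0) :
      2 * #{x ∈ S i | 0 < ψ x (L y₀)} ≤ #(S i) := by
    refine two_mul_card_filter_le_of_sum_arctan_eq_zero (l := atTop)
      (fun k => hψ (θ k)) fun x _ hx => ?_
    refine (tendsto_natCast_atTop_atTop.comp hθ.tendsto_atTop).atTop_mul_pos hx ?_
    exact (((continuous_L (ψ x)).comp continuous_subtype_val).tendsto y₀).comp hlim
  refine ⟨L y₀, ?_, fun i => ⟨two_mul_card_le φ i fun k => congrFun (hy k) i, ?_⟩⟩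
  · have L_injective : Function.Injective L :=
      (linearIndependent_iff_injective_fintypeLinearCombination.mp hv).comp
        (WithLp.linearEquiv 2 ℝ _).injective
    exact (map_ne_zero_iff L L_injective).mpr (ne_zero_of_mem_unit_sphere y₀)
  · simpa using two_mul_card_le (-φ) i fun k => by simpa [Real.arctan_neg] using congrFun (hy k) i

variable {σ : Type*} [Fintype σ]

theorem finrank_restrictDegree (R : Type*) [CommRing R] [Nontrivial R] (m : ℕ) :
    finrank R (restrictDegree σ R m) = (m + 1) ^ Fintype.card σ := by
  refine (finrank_eq_nat_card_basis (basisRestrictSupport R {n : σ →₀ ℕ | ∀ i, n i ≤ m})).trans ?_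
  simpa only [Nat.lt_succ_iff] using natCard_setOf_forall_lt σ (m + 1)

theorem totalDegree_le_of_mem_restrictDegree {R : Type*} [CommSemiring R] {p : MvPolynomial σ R}
    {m : ℕ} (hp : p ∈ restrictDegree σ R m) : p.totalDegree ≤ Fintype.card σ * m := by
  refine Finset.sup_le fun s hs => ?_
  rw [Finsupp.sum_fintype _ _ fun _ => rfl]
  simpa using sum_le_card_nsmul univ _ m fun i _ => (mem_restrictDegree σ p m).mp hp s hs i

theorem exists_polynomial_forall_two_mul_card_filter_le {κ : Type*} [Fintype κ] {m : ℕ}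
    (hm : Fintype.card κ < (m + 1) ^ Fintype.card σ) (S : κ → Finset (σ → ℝ)) :
    ∃ q : MvPolynomial σ ℝ, q ≠ 0 ∧ q.totalDegree ≤ Fintype.card σ * m ∧
      ∀ i, 2 * #{x ∈ S i | 0 < eval x q} ≤ #(S i) ∧ 2 * #{x ∈ S i | eval x q < 0} ≤ #(S i) := by
  obtain ⟨q, hq, hS⟩ := exists_ne_zero_forall_two_mul_card_filter_le
    (V := restrictDegree σ ℝ m) (by rwa [finrank_restrictDegree])
    (fun x => (aeval x).toLinearMap ∘ₗ Submodule.subtype _) S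
  exact ⟨q, by simpa using hq, totalDegree_le_of_mem_restrictDegree q.2, hS⟩

end HamSandwich

section Partition

open Finset

variable {σ : Type*} {P : Finset (σ → ℝ)} {j m : ℕ} {p : MvPolynomial σ ℝ}

theorem forall_eval_pos_or_forall_eval_neg {V : Set (σ → ℝ)} (hV : IsPreconnected V)
    (hp : ∀ y ∈ V, eval y p ≠ 0) : (∀ y ∈ V, 0 < eval y p) ∨ ∀ y ∈ V, eval y p < 0 := by
  by_contra! ⟨⟨y, hy, hyp⟩, ⟨z, hz, hzp⟩⟩
  obtain ⟨w, hw, hwp⟩ :=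
    hV.intermediate_value hy hz (continuous_eval p).continuousOn ⟨hyp, hzp⟩
  exact hp w hw hwp

/-- The finite set `P` is partitioned by the zero set of `p` into at most `2 ^ j` cells of at most
`#P / 2 ^ j` points each. The cells are only required to contain the intersection of `P` with every
connected set avoiding the zeros, so they may be unions of components and may overlap. -/
def IsDyadicPartition (P : Finset (σ → ℝ)) (j : ℕ) (p : MvPolynomial σ ℝ) : Prop :=
  ∃ 𝒞 : Finset (Finset (σ → ℝ)), #𝒞 ≤ 2 ^ j ∧ (∀ S ∈ 𝒞, 2 ^ j * #S ≤ #P) ∧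
    ∀ V : Set (σ → ℝ), IsPreconnected V → (∀ y ∈ V, eval y p ≠ 0) → ∃ S ∈ 𝒞, ↑P ∩ V ⊆ ↑S

namespace IsDyadicPartition

theorem one (P : Finset (σ → ℝ)) : IsDyadicPartition P 0 1 :=
  ⟨{P}, by simp, by simp, fun _ _ _ => ⟨P, mem_singleton_self P, Set.inter_subset_left⟩⟩

theorem two_pow_mul_ncard_le (hp : IsDyadicPartition P j p) {V : Set (σ → ℝ)}
    (hV : IsPreconnected V) (hVp : ∀ y ∈ V, eval y p ≠ 0) : 2 ^ j * (↑P ∩ V).ncard ≤ #P := by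
  obtain ⟨𝒞, -, hsize, hcover⟩ := hp
  obtain ⟨S, hS, hPS⟩ := hcover V hV hVp
  have ncard_le : (↑P ∩ V).ncard ≤ #S := by
    simpa using Set.ncard_le_ncard hPS S.finite_toSet
  exact (Nat.mul_le_mul_left _ ncard_le).trans (hsize S hS)

variable [Fintype σ]

theorem exists_mul_succ (hp : IsDyadicPartition P j p) (hm : 2 ^ j < (m + 1) ^ Fintype.card σ) :
    ∃ q : MvPolynomial σ ℝ, q ≠ 0 ∧ q.totalDegree ≤ Fintype.card σ * m ∧
      IsDyadicPartition P (j + 1) (p * q) := by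
  classical
  obtain ⟨𝒞, hcard, hsize, hcover⟩ := hp
  obtain ⟨q, hq, hdeg, hbisect⟩ := exists_polynomial_forall_two_mul_card_filter_le (κ := 𝒞)
    (by simpa using hcard.trans_lt hm) Subtype.val
  let pos (S : Finset (σ → ℝ)) : Finset (σ → ℝ) := {x ∈ S | 0 < eval x q}
  let neg (S : Finset (σ → ℝ)) : Finset (σ → ℝ) := {x ∈ S | eval x q < 0}
  have size_le {S T : Finset (σ → ℝ)} (hS : S ∈ 𝒞) (hT : 2 * #T ≤ #S) : 2 ^ (j + 1) * #T ≤ #P := by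
    rw [pow_succ, mul_assoc]
    exact (Nat.mul_le_mul_left _ hT).trans (hsize S hS)
  refine ⟨q, hq, hdeg, 𝒞.image pos ∪ 𝒞.image neg, ?_, fun T hT => ?_, fun V hV hVpq => ?_⟩
  · calc #(𝒞.image pos ∪ 𝒞.image neg) ≤ #𝒞 + #𝒞 :=
          (card_union_le _ _).trans (add_le_add card_image_le card_image_le)
      _ ≤ 2 ^ (j + 1) := by lia
  · rcases mem_union.mp hT with hT | hT <;> obtain ⟨S, hS, rfl⟩ := mem_image.mp hT
    · exact size_le hS (hbisect ⟨S, hS⟩).1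
    · exact size_le hS (hbisect ⟨S, hS⟩).2
  · simp only [map_mul, mul_ne_zero_iff] at hVpq
    obtain ⟨S, hS, hPS⟩ := hcover V hV fun y hy => (hVpq y hy).1
    rcases forall_eval_pos_or_forall_eval_neg hV fun y hy => (hVpq y hy).2 with hsign | hsign
    · exact ⟨pos S, mem_union_left _ (mem_image_of_mem _ hS),
        fun x hx => mem_filter.mpr ⟨hPS hx, hsign x hx.2⟩⟩
    · exact ⟨neg S, mem_union_right _ (mem_image_of_mem _ hS),
        fun x hx => mem_filter.mpr ⟨hPS hx, hsign x hx.2⟩⟩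

theorem exists_mul_add (hp : IsDyadicPartition P j p) (t : ℕ)
    (hm : 2 ^ (j + t) ≤ (m + 1) ^ Fintype.card σ) :
    ∃ q : MvPolynomial σ ℝ, q ≠ 0 ∧ q.totalDegree ≤ t * (Fintype.card σ * m) ∧
      IsDyadicPartition P (j + t) (p * q) := by
  induction t with
  | zero => exact ⟨1, one_ne_zero, by simp, by simpa using hp⟩
  | succ t ih =>
    have two_pow_lt : 2 ^ (j + t) < (m + 1) ^ Fintype.card σ :=
      (Nat.pow_lt_pow_succ one_lt_two).trans_le hm
    obtain ⟨q, hq, hqdeg, hpq⟩ := ih two_pow_lt.le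
    obtain ⟨r, hr, hrdeg, hpqr⟩ := hpq.exists_mul_succ two_pow_lt
    refine ⟨q * r, mul_ne_zero hq hr, ?_, by rwa [← mul_assoc]⟩
    rw [add_one_mul]
    exact (totalDegree_mul q r).trans (add_le_add hqdeg hrdeg)

end IsDyadicPartition

variable [Fintype σ]

/- Between levels `K` and `K + 1` each point set is bisected `card σ` times, by polynomials of
degree at most `card σ * 2 ^ (K + 1)`, so the degrees add up to a geometric sum. -/
theorem exists_isDyadicPartition (P : Finset (σ → ℝ)) (K : ℕ) :
    ∃ p : MvPolynomial σ ℝ, p ≠ 0 ∧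
      p.totalDegree + 2 * Fintype.card σ ^ 2 ≤ 2 * Fintype.card σ ^ 2 * 2 ^ K ∧
      IsDyadicPartition P (K * Fintype.card σ) p := by
  induction K with
  | zero => exact ⟨1, one_ne_zero, by simp, by simpa using IsDyadicPartition.one P⟩
  | succ K ih =>
    obtain ⟨p, hp, hpdeg, hpart⟩ := ih
    have two_pow_le : 2 ^ (K * Fintype.card σ + Fintype.card σ) ≤
        (2 ^ (K + 1) + 1) ^ Fintype.card σ := by
      rw [← Nat.succ_mul, pow_mul]
      exact Nat.pow_le_pow_left (Nat.le_succ _) _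
    obtain ⟨q, hq, hqdeg, hpq⟩ := hpart.exists_mul_add _ two_pow_le
    refine ⟨p * q, mul_ne_zero hp hq, ?_, by rwa [Nat.succ_mul]⟩
    calc (p * q).totalDegree + 2 * Fintype.card σ ^ 2
        ≤ p.totalDegree + 2 * Fintype.card σ ^ 2 + q.totalDegree := by
          linarith [totalDegree_mul p q]
      _ ≤ 2 * Fintype.card σ ^ 2 * 2 ^ K + Fintype.card σ * (Fintype.card σ * 2 ^ (K + 1)) :=
          add_le_add hpdeg hqdeg
      _ = 2 * Fintype.card σ ^ 2 * 2 ^ (K + 1) := by ring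

end Partition

theorem exists_mul_two_pow_le_add {c : ℕ} (hc : 0 < c) (D : ℕ) :
    ∃ K, c * 2 ^ K ≤ D + c ∧ D ≤ 2 * c * 2 ^ K := by
  refine ⟨Nat.log 2 (D / c + 1), ?_, ?_⟩
  · calc c * 2 ^ Nat.log 2 (D / c + 1) ≤ c * (D / c + 1) :=
          Nat.mul_le_mul_left c (Nat.pow_log_le_self 2 (Nat.succ_ne_zero _))
      _ ≤ D + c := by linarith [Nat.mul_div_le D c]
  · calc D ≤ c * (D / c + 1) := (Nat.lt_mul_div_succ D hc).le
      _ ≤ c * 2 ^ (Nat.log 2 (D / c + 1) + 1) :=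
          Nat.mul_le_mul_left c (Nat.lt_pow_succ_log_self one_lt_two _).le
      _ = 2 * c * 2 ^ Nat.log 2 (D / c + 1) := by ring

/-- **Guth–Katz polynomial partitioning for points.** For every `d ≥ 1` there is a constant
`C_d` such that for every finite point set `P ⊆ ℝ^d` and integer `D ≥ 1` there is a nonzero
`d`-variate real polynomial `p` of degree at most `D` such that each connected component of
`ℝ^d \ Z(p)` contains at most `C_d·|P|/D^d` points of `P`. -/
theorem guth_katz_polynomial_partitioning (d : ℕ) (hd : 1 ≤ d) :
    ∃ C : ℝ, 0 < C ∧
      ∀ (P : Finset (Fin d → ℝ)) (D : ℕ), 1 ≤ D →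
        ∃ p : MvPolynomial (Fin d) ℝ, p ≠ 0 ∧ p.totalDegree ≤ D ∧
          ∀ x : Fin d → ℝ, eval x p ≠ 0 →
            (Set.ncard (↑P ∩ connectedComponentIn {y : Fin d → ℝ | eval y p ≠ 0} x) : ℝ)
              ≤ C * (P.card : ℝ) / (D : ℝ) ^ d := by
  refine ⟨((2 * (2 * d ^ 2) : ℕ) : ℝ) ^ d, by positivity, fun P D hD => ?_⟩
  obtain ⟨K, hK, hDK⟩ := exists_mul_two_pow_le_add (c := 2 * d ^ 2) (by positivity) D
  obtain ⟨p, hp, hdeg, hpart⟩ := exists_isDyadicPartition P K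
  rw [Fintype.card_fin] at hdeg hpart
  refine ⟨p, hp, by lia, fun x _ => (le_div_iff₀ (by positivity)).mpr ?_⟩
  have card_le := hpart.two_pow_mul_ncard_le (isPreconnected_connectedComponentIn (x := x))
    (connectedComponentIn_subset {y | eval y p ≠ 0} x)
  norm_cast
  set N := (↑P ∩ connectedComponentIn {y | eval y p ≠ 0} x).ncard
  calc N * D ^ d ≤ N * (2 * (2 * d ^ 2) * 2 ^ K) ^ d := by gcongr
    _ = (2 * (2 * d ^ 2)) ^ d * (2 ^ (K * d) * N) := by rw [mul_pow, pow_mul]; ring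
    _ ≤ (2 * (2 * d ^ 2)) ^ d * P.card := Nat.mul_le_mul_left _ card_le
end

section
/- (Warren's bound.) For every positive integer d there is a constant C_d such that for every nonzero d-variate real polynomial f of degree at most D ≥ 1, the number of connected components of ℝ^d \ Z(f) is at most C_d·D^d. -/
open MvPolynomial

/-!
Pick one point in each of finitely many components of `{f ≠ 0}`. For small `ε > 0` the polynomial
`φ = f² - ε ∑ᵢ Xᵢ ^ (2 deg f + 2)` is positive at all these points, while it is nonpositive on
`{f = 0}` and near infinity; hence each of the components contains a local maximum of `φ`.

The critical points of `φ` are the solutions of a system `Xᵢ ^ m = qᵢ` with `deg qᵢ < m`, where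
`m = 2 deg f + 1`. Modulo these equations every polynomial is a linear combination of the `m ^ d`
monomials with all exponents below `m`, so the quotient algebra has dimension at most `m ^ d`.
Distinct solutions give distinct algebra homomorphisms from the quotient to the field, and by
Dedekind's independence of characters there are no more of those than the dimension.
-/

section Algebra

variable {σ R A : Type*}

lemma aeval_mem_of_forall_aeval_monomial_mem [CommSemiring R] [CommSemiring A] [Algebra R A]
    {x : σ → A} {W : Submodule R A} {p : MvPolynomial σ R}
    (h : ∀ s ∈ p.support, aeval x (monomial s (1 : R)) ∈ W) : aeval x p ∈ W := by
  rw [p.as_sum, map_sum]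
  refine W.sum_mem fun s hs ↦ ?_
  rw [← mul_one (coeff s p), ← smul_eq_mul, ← smul_monomial, map_smul (aeval x)]
  exact W.smul_mem _ (h s hs)

lemma exists_totalDegree_lt_aeval_eq_aeval_monomial [CommSemiring R] [CommSemiring A] [Algebra R A]
    {x : σ → A} {i : σ} {n : ℕ} {q : MvPolynomial σ R} (hq : q.totalDegree < n)
    (hx : x i ^ n = aeval x q) {s : σ →₀ ℕ} (hs : n ≤ s i) :
    ∃ p : MvPolynomial σ R, p.totalDegree < s.degree ∧
      aeval x p = aeval x (monomial s (1 : R)) := by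
  obtain ⟨t, rfl⟩ := exists_add_of_le (Finsupp.single_le_iff.2 hs)
  refine ⟨monomial t 1 * q, ?_, ?_⟩
  · have ht : (monomial t (1 : R)).totalDegree ≤ t.degree := totalDegree_monomial_le t 1
    rw [map_add, Finsupp.degree_single]
    exact (totalDegree_mul _ _).trans_lt (by lia)
  · have hs_mul : monomial (Finsupp.single i n + t) (1 : R) = X i ^ n * monomial t 1 := by
      rw [X_pow_eq_monomial, monomial_mul, mul_one]
    rw [hs_mul, map_mul, map_mul, map_pow, aeval_X, hx, mul_comm]

lemma aeval_mem_span_bounded_monomials [Fintype σ] [CommSemiring R] [CommSemiring A] [Algebra R A]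
    {x : σ → A} {m : σ → ℕ} {q : σ → MvPolynomial σ R} (hq : ∀ i, (q i).totalDegree < m i)
    (hx : ∀ i, x i ^ m i = aeval x (q i)) (p : MvPolynomial σ R) :
    aeval x p ∈
      Submodule.span R (Set.range fun a : (i : σ) → Fin (m i) ↦ ∏ i, x i ^ (a i : ℕ)) := by
  suffices hmonomial : ∀ s : σ →₀ ℕ, aeval x (monomial s (1 : R)) ∈
      Submodule.span R (Set.range fun a : (i : σ) → Fin (m i) ↦ ∏ i, x i ^ (a i : ℕ)) from
    aeval_mem_of_forall_aeval_monomial_mem fun s _ ↦ hmonomial s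
  intro s
  induction h : s.degree using Nat.strong_induction_on generalizing s with
  | _ N ih =>
    by_cases hs : ∀ i, s i < m i
    · refine Submodule.subset_span ⟨fun i ↦ ⟨s i, hs i⟩, ?_⟩
      simp [aeval_monomial, Finsupp.prod_fintype]
    · obtain ⟨i, hi⟩ := not_forall.1 hs
      obtain ⟨r, hr, hrs⟩ :=
        exists_totalDegree_lt_aeval_eq_aeval_monomial (hq i) (hx i) (not_lt.1 hi)
      rw [← hrs]
      exact aeval_mem_of_forall_aeval_monomial_mem fun t ht ↦
        ih t.degree (h ▸ (le_totalDegree ht).trans_lt hr) t rfl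

variable {K : Type*} [Field K] [Fintype σ]

lemma finite_and_finrank_le_of_pow_eq_aeval [CommRing A] [Algebra K A] {x : σ → A} {m : σ → ℕ}
    {q : σ → MvPolynomial σ K} (hq : ∀ i, (q i).totalDegree < m i)
    (hx : ∀ i, x i ^ m i = aeval x (q i))
    (hsurj : Function.Surjective (aeval x : MvPolynomial σ K →ₐ[K] A)) :
    Module.Finite K A ∧ Module.finrank K A ≤ ∏ i, m i := by
  classical
  set b : ((i : σ) → Fin (m i)) → A := fun a ↦ ∏ i, x i ^ (a i : ℕ)
  have hspan : Submodule.span K (Set.range b) = ⊤ :=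
    Submodule.eq_top_iff'.2 <| hsurj.forall.2 <| aeval_mem_span_bounded_monomials hq hx
  refine ⟨⟨hspan ▸ Submodule.fg_span (Set.finite_range b)⟩, ?_⟩
  have hrank := finrank_range_le_card (R := K) b
  rw [Set.finrank, hspan, finrank_top] at hrank
  simpa using hrank

theorem encard_setOf_pow_eq_eval_le {m : σ → ℕ} {q : σ → MvPolynomial σ K}
    (hq : ∀ i, (q i).totalDegree < m i) :
    {z : σ → K | ∀ i, z i ^ m i = eval z (q i)}.encard ≤ (∏ i, m i : ℕ) := by
  set Z := {z : σ → K | ∀ i, z i ^ m i = eval z (q i)}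
  let I : Ideal (MvPolynomial σ K) := Ideal.span (Set.range fun i ↦ X i ^ m i - q i)
  let x : σ → MvPolynomial σ K ⧸ I := fun i ↦ Ideal.Quotient.mkₐ K I (X i)
  have haeval : aeval x = Ideal.Quotient.mkₐ K I := algHom_ext fun i ↦ aeval_X x i
  have hx (i : σ) : x i ^ m i = aeval x (q i) := by
    rw [haeval, ← map_pow]
    exact Ideal.Quotient.eq.2 (Ideal.subset_span ⟨i, rfl⟩)
  obtain ⟨_, hrank⟩ := finite_and_finrank_le_of_pow_eq_aeval hq hx
    (haeval ▸ Ideal.Quotient.mkₐ_surjective K I)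
  have hvanish (z : Z) : I ≤ RingHom.ker (aeval z.1 : MvPolynomial σ K →ₐ[K] K) := by
    refine Ideal.span_le.2 (Set.range_subset_iff.2 fun i ↦ ?_)
    simp [RingHom.mem_ker, aeval_eq_eval, z.2 i]
  let evalAt (z : Z) : (MvPolynomial σ K ⧸ I) →ₐ[K] K :=
    Ideal.Quotient.liftₐ I (aeval z.1) (hvanish z)
  have hevalAt (z : Z) (i : σ) : evalAt z (x i) = z.1 i :=
    (Ideal.Quotient.liftₐ_apply I (aeval z.1) (hvanish z) (x i)).trans (aeval_X z.1 i)
  have hinj : Function.Injective evalAt := fun z w h ↦ Subtype.ext <| funext fun i ↦ by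
    rw [← hevalAt z, ← hevalAt w, h]
  calc Z.encard ≤ ENat.card ((MvPolynomial σ K ⧸ I) →ₐ[K] K) :=
        ENat.card_le_card_of_injective hinj
    _ = Nat.card ((MvPolynomial σ K ⧸ I) →ₐ[K] K) := ENat.card_eq_coe_natCard _
    _ ≤ (∏ i, m i : ℕ) := by exact_mod_cast (card_algHom_le_finrank K _ K).trans hrank

end Algebra

section Critical

variable {σ R K : Type*}

/-- The critical points of the polynomial function `p`: the common zeros of its formal partial
derivatives. -/
def criticalPoints [CommSemiring R] (p : MvPolynomial σ R) : Set (σ → R) :=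
  {z | ∀ i, eval z (pderiv i p) = 0}

lemma totalDegree_pderiv_le [CommSemiring R] (p : MvPolynomial σ R) (i : σ) :
    (pderiv i p).totalDegree ≤ p.totalDegree := by
  conv_lhs => rw [p.as_sum, map_sum]
  refine totalDegree_finsetSum_le fun s hs ↦ ?_
  rw [pderiv_monomial]
  calc (monomial (s - Finsupp.single i 1) (coeff s p * s i)).totalDegree
      ≤ (s - Finsupp.single i 1).degree := totalDegree_monomial_le _ _
    _ ≤ s.degree := Finsupp.degree_mono tsub_le_self
    _ ≤ p.totalDegree := le_totalDegree hs

lemma pderiv_psum [CommSemiring R] [Fintype σ] (i : σ) (n : ℕ) :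
    pderiv i (psum σ R (n + 1)) = C (n + 1 : R) * X i ^ n := by
  rw [psum, map_sum, Finset.sum_eq_single i]
  · simp
  · intro j _ hj
    simp [pderiv_X_of_ne hj]
  · simp

theorem encard_criticalPoints_sub_psum_le [Fintype σ] [Field K] {p : MvPolynomial σ K} {n : ℕ}
    (hp : p.totalDegree ≤ n) {c : K} (hc : c * (n + 2) ≠ 0) :
    (criticalPoints (p - C c * psum σ K (n + 2))).encard ≤ ((n + 1) ^ Fintype.card σ : ℕ) := by
  let q (i : σ) : MvPolynomial σ K := C (c * (n + 2))⁻¹ * pderiv i p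
  have hq (i : σ) : (q i).totalDegree < n + 1 := by
    have hmul := totalDegree_mul (C (c * (n + 2))⁻¹) (pderiv i p)
    rw [totalDegree_C, zero_add] at hmul
    exact Nat.lt_succ_of_le (hmul.trans ((totalDegree_pderiv_le p i).trans hp))
  have hcritical : criticalPoints (p - C c * psum σ K (n + 2)) ⊆
      {z | ∀ i, z i ^ (n + 1) = eval z (q i)} := fun z hz i ↦ by
    have hzi : eval z (pderiv i p) = c * (n + 2) * z i ^ (n + 1) := by
      have hderiv := hz i
      simp only [map_sub, pderiv_C_mul, pderiv_psum, map_mul, map_pow, eval_C, eval_X] at hderiv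
      push_cast at hderiv
      linear_combination hderiv
    simp only [q, map_mul, eval_C]
    rw [hzi, inv_mul_cancel_left₀ hc]
  simpa using (Set.encard_le_encard hcritical).trans (encard_setOf_pow_eq_eval_le hq)

end Critical

section Calculus

theorem hasDerivAt_eval_update {σ 𝕜 : Type*} [DecidableEq σ] [NontriviallyNormedField 𝕜]
    (p : MvPolynomial σ 𝕜) (x : σ → 𝕜) (i : σ) (t : 𝕜) :
    HasDerivAt (fun u ↦ eval (Function.update x i u) p)
      (eval (Function.update x i t) (pderiv i p)) t := by
  induction p using MvPolynomial.induction_on with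
  | C a => simpa using hasDerivAt_const t a
  | add p q hp hq =>
    simp only [map_add]
    exact hp.add hq
  | mul_X p j hp =>
    have hX : HasDerivAt (fun u ↦ Function.update x i u j)
        (eval (Function.update x i t) (pderiv i (X j))) t := by
      simpa [pderiv_X, Pi.single_apply, eq_comm, apply_ite] using
        hasDerivAt_pi.1 (hasDerivAt_update x i t) j
    simp only [map_mul, eval_X]
    convert! hp.mul hX using 1
    simp [mul_comm, add_comm]

theorem mem_criticalPoints_of_isLocalExtr {σ : Type*} {p : MvPolynomial σ ℝ} {x : σ → ℝ}
    (h : IsLocalExtr (fun y ↦ eval y p) x) : x ∈ criticalPoints p := by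
  classical
  intro i
  rw [← Function.update_eq_self i x] at h
  have hline : IsLocalExtr (fun t ↦ eval (Function.update x i t) p) (x i) :=
    h.comp_continuous (by fun_prop)
  simpa using hline.hasDerivAt_eq_zero (hasDerivAt_eval_update p x i (x i))

end Calculus

section Growth

open Bornology Asymptotics

variable {σ 𝕜 : Type*} [Fintype σ]

lemma norm_eval_monomial_le [NormedCommRing 𝕜] [NormOneClass 𝕜] (s : σ →₀ ℕ) (a : 𝕜)
    (x : σ → 𝕜) : ‖eval x (monomial s a)‖ ≤ ‖a‖ * ‖x‖ ^ s.degree := by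
  rw [eval_monomial, Finsupp.prod_fintype _ _ fun _ ↦ pow_zero _]
  calc ‖a * ∏ i, x i ^ s i‖ ≤ ‖a‖ * ‖∏ i, x i ^ s i‖ := norm_mul_le _ _
    _ ≤ ‖a‖ * ∏ i, ‖x i ^ s i‖ := by gcongr; exact Finset.norm_prod_le _ _
    _ ≤ ‖a‖ * ∏ i, ‖x‖ ^ s i := by
        gcongr with i
        exact (norm_pow_le (x i) (s i)).trans (by gcongr; exact norm_le_pi_norm x i)
    _ = ‖a‖ * ‖x‖ ^ s.degree := by rw [Finset.prod_pow_eq_pow_sum, Finsupp.degree_eq_sum]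

theorem isLittleO_eval_norm_pow [NormedCommRing 𝕜] [NormOneClass 𝕜] {p : MvPolynomial σ 𝕜}
    {n : ℕ} (hp : p.totalDegree < n) :
    (fun x : σ → 𝕜 ↦ eval x p) =o[cobounded (σ → 𝕜)] fun x ↦ ‖x‖ ^ n := by
  have hsum : (fun x : σ → 𝕜 ↦ eval x p) =
      fun x ↦ ∑ s ∈ p.support, eval x (monomial s (coeff s p)) := by
    ext x
    rw [← map_sum, ← p.as_sum]
  rw [hsum]
  refine IsLittleO.fun_sum fun s hs ↦ ?_
  have hO : (fun x : σ → 𝕜 ↦ eval x (monomial s (coeff s p))) =O[cobounded (σ → 𝕜)]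
      fun x ↦ ‖x‖ ^ s.degree :=
    .of_bound ‖coeff s p‖ <| .of_forall fun x ↦ by
      simpa using norm_eval_monomial_le s (coeff s p) x
  exact hO.trans_isLittleO <|
    (isLittleO_pow_pow_atTop_of_lt ((le_totalDegree hs).trans_lt hp)).comp_tendsto
      tendsto_norm_cobounded_atTop

lemma norm_pow_le_eval_psum {n : ℕ} (hn : Even n) (hn0 : n ≠ 0) (x : σ → ℝ) :
    ‖x‖ ^ n ≤ eval x (psum σ ℝ n) := by
  simp only [psum, map_sum, map_pow, eval_X]
  rcases isEmpty_or_nonempty σ with _ | _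
  · simp [Subsingleton.elim x 0, hn0]
  · obtain ⟨i, hi⟩ := Finite.exists_max fun i ↦ ‖x i‖
    calc ‖x‖ ^ n ≤ ‖x i‖ ^ n :=
          pow_le_pow_left₀ (norm_nonneg x) ((pi_norm_le_iff_of_nonempty _).2 hi) n
      _ = x i ^ n := by rw [Real.norm_eq_abs, hn.pow_abs]
      _ ≤ ∑ j, x j ^ n :=
          Finset.single_le_sum (fun j _ ↦ hn.pow_nonneg (x j)) (Finset.mem_univ i)

lemma isCompact_superlevel_sub_psum {p : MvPolynomial σ ℝ} {n : ℕ} (hn : Even n)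
    (hp : p.totalDegree < n) {ε : ℝ} (hε : 0 < ε) {c : ℝ} (hc : 0 < c) :
    IsCompact {x : σ → ℝ | c ≤ eval x (p - C ε * psum σ ℝ n)} := by
  refine Metric.isCompact_of_isClosed_isBounded
    (isClosed_le continuous_const (continuous_eval _)) ?_
  rw [isBounded_def]
  filter_upwards [(isLittleO_eval_norm_pow hp).bound hε] with x hx
  have hpsum := norm_pow_le_eval_psum hn (Nat.ne_zero_of_lt hp) x
  have hpx : eval x p ≤ ε * eval x (psum σ ℝ n) :=
    calc eval x p ≤ ‖eval x p‖ := Real.le_norm_self _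
      _ ≤ ε * ‖x‖ ^ n := by simpa using hx
      _ ≤ ε * eval x (psum σ ℝ n) := by gcongr
  simp only [Set.mem_compl_iff, Set.mem_ofPred_eq, map_sub, map_mul, eval_C, not_le]
  linarith

end Growth

section Topology

variable {X α : Type*} [TopologicalSpace X]

lemma closure_connectedComponentIn_inter_subset (U : Set X) (x : X) :
    closure (connectedComponentIn U x) ∩ U ⊆ connectedComponentIn U x := by
  intro y ⟨hy, hyU⟩
  obtain ⟨w, hw⟩ := closure_nonempty_iff.1 ⟨y, hy⟩
  have hpre : IsPreconnected (insert y (connectedComponentIn U x)) :=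
    isPreconnected_connectedComponentIn.subset_closure (Set.subset_insert _ _)
      (Set.insert_subset hy subset_closure)
  rw [connectedComponentIn_eq hw]
  exact hpre.subset_connectedComponentIn (Set.mem_insert_of_mem _ hw)
    (Set.insert_subset hyU (connectedComponentIn_subset U x)) (Set.mem_insert y _)

theorem exists_isLocalMax_mem_connectedComponentIn [LocallyConnectedSpace X] [LinearOrder α]
    [TopologicalSpace α] [ClosedIciTopology α] {U : Set X} (hU : IsOpen U) {φ : X → α}
    (hφ : Continuous φ) {x : X} (hcompact : IsCompact {y | φ x ≤ φ y})
    (hsub : {y | φ x ≤ φ y} ⊆ U) :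
    ∃ z ∈ connectedComponentIn U x, IsLocalMax φ z := by
  set A := connectedComponentIn U x
  have hxA : x ∈ A := mem_connectedComponentIn (hsub le_rfl)
  obtain ⟨z, ⟨hxz, hzA⟩, hmax⟩ := (hcompact.inter_right isClosed_closure).exists_isMaxOn
    ⟨x, le_rfl, subset_closure hxA⟩ hφ.continuousOn
  replace hzA : z ∈ A := closure_connectedComponentIn_inter_subset U x ⟨hzA, hsub hxz⟩
  refine ⟨z, hzA, ?_⟩
  filter_upwards [hU.connectedComponentIn.mem_nhds hzA] with y hyA
  rcases le_total (φ x) (φ y) with hxy | hyx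
  · exact hmax ⟨hxy, subset_closure hyA⟩
  · exact hyx.trans hxz

end Topology

section Components

open scoped Topology

lemma encard_le_of_forall_finset_card_le {α : Type*} {s : Set α} {n : ℕ}
    (h : ∀ t : Finset α, ↑t ⊆ s → t.card ≤ n) : s.encard ≤ n := by
  by_contra! hlt
  obtain ⟨t, hts, ht⟩ := Set.exists_subset_encard_eq (Order.add_one_le_of_lt hlt)
  lift t to Finset α using Set.finite_of_encard_eq_coe (k := n + 1) (by simpa using ht)
  rw [Set.encard_coe_eq_coe_finsetCard] at ht
  have hcard : t.card = n + 1 := by exact_mod_cast ht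
  exact absurd (h t hts) (by lia)

lemma exists_pos_forall_mul_lt {α : Type*} (s : Finset α) (g : α → ℝ) {h : α → ℝ}
    (hpos : ∀ a ∈ s, 0 < h a) : ∃ ε > 0, ∀ a ∈ s, ε * g a < h a := by
  have hsmall : ∀ᶠ ε in 𝓝[>] (0 : ℝ), ∀ a ∈ s, ε * g a < h a := by
    refine (Filter.eventually_all_finset s).2 fun a ha ↦ ?_
    have htendsto : Filter.Tendsto (· * g a) (𝓝 0) (𝓝 0) :=
      (continuous_mul_const (g a)).tendsto' _ _ (zero_mul _)
    exact (htendsto.mono_left nhdsWithin_le_nhds).eventually_lt_const (hpos a ha)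
  exact (hsmall.and self_mem_nhdsWithin).exists.imp fun ε h ↦ h.symm

variable {σ : Type*} [Fintype σ]

/-- Warren's perturbation of `f²`, whose critical points mark the connected components of
`{f ≠ 0}`. The exponent is even and exceeds the degree of `f²`, so for `ε > 0` the subtracted term
is nonnegative and dominates near infinity. -/
noncomputable def warrenPerturbation (f : MvPolynomial σ ℝ) (ε : ℝ) : MvPolynomial σ ℝ :=
  f ^ 2 - C ε * psum σ ℝ (2 * f.totalDegree + 2)

lemma eval_warrenPerturbation (f : MvPolynomial σ ℝ) (ε : ℝ) (x : σ → ℝ) :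
    eval x (warrenPerturbation f ε) =
      eval x f ^ 2 - ε * eval x (psum σ ℝ (2 * f.totalDegree + 2)) := by
  simp [warrenPerturbation]

lemma encard_criticalPoints_warrenPerturbation_le (f : MvPolynomial σ ℝ) {ε : ℝ} (hε : 0 < ε) :
    (criticalPoints (warrenPerturbation f ε)).encard ≤
      ((2 * f.totalDegree + 1) ^ Fintype.card σ : ℕ) :=
  encard_criticalPoints_sub_psum_le (totalDegree_pow f 2) (by positivity)

lemma eval_ne_zero_of_eval_warrenPerturbation_pos {f : MvPolynomial σ ℝ} {ε : ℝ} (hε : 0 < ε)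
    {x : σ → ℝ} (hx : 0 < eval x (warrenPerturbation f ε)) : eval x f ≠ 0 := by
  intro hf
  have hpsum : 0 ≤ eval x (psum σ ℝ (2 * f.totalDegree + 2)) :=
    (by positivity : 0 ≤ ‖x‖ ^ (2 * f.totalDegree + 2)).trans
      (norm_pow_le_eval_psum (by simp [parity_simps]) (by simp) x)
  rw [eval_warrenPerturbation, hf] at hx
  linarith [mul_nonneg hε.le hpsum]

lemma exists_mem_criticalPoints_connectedComponentIn {f : MvPolynomial σ ℝ} {ε : ℝ} (hε : 0 < ε)
    {x : σ → ℝ} (hx : 0 < eval x (warrenPerturbation f ε)) :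
    ∃ z ∈ connectedComponentIn {y | eval y f ≠ 0} x,
      z ∈ criticalPoints (warrenPerturbation f ε) := by
  have hcompact := isCompact_superlevel_sub_psum (n := 2 * f.totalDegree + 2)
    (by simp [parity_simps]) ((totalDegree_pow f 2).trans_lt (by lia)) hε hx
  obtain ⟨z, hz, hmax⟩ := exists_isLocalMax_mem_connectedComponentIn
    (isOpen_ne_fun (continuous_eval f) continuous_const) (continuous_eval _) hcompact
    fun y hy ↦ eval_ne_zero_of_eval_warrenPerturbation_pos hε (hx.trans_le hy)
  exact ⟨z, hz, mem_criticalPoints_of_isLocalExtr hmax.isExtr⟩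

theorem card_le_of_injOn_connectedComponentIn (f : MvPolynomial σ ℝ) {P : Finset (σ → ℝ)}
    (hP : ∀ x ∈ P, eval x f ≠ 0)
    (hinj : Set.InjOn (connectedComponentIn {y | eval y f ≠ 0}) P) :
    P.card ≤ (2 * f.totalDegree + 1) ^ Fintype.card σ := by
  obtain ⟨ε, hε, hεP⟩ := exists_pos_forall_mul_lt P
    (fun x ↦ eval x (psum σ ℝ (2 * f.totalDegree + 2))) fun x hx ↦ sq_pos_of_ne_zero (hP x hx)
  have hpos (x) (hx : x ∈ P) : 0 < eval x (warrenPerturbation f ε) := by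
    rw [eval_warrenPerturbation]
    exact sub_pos.2 (hεP x hx)
  have hcritical (x) (hx : x ∈ P) := exists_mem_criticalPoints_connectedComponentIn hε (hpos x hx)
  choose! z hzmem hz using hcritical
  have hz_inj : Set.InjOn z P := fun x hx y hy hxy ↦ hinj hx hy <| by
    rw [connectedComponentIn_eq (hzmem x hx), connectedComponentIn_eq (hzmem y hy), hxy]
  have hle := (Set.encard_le_encard_of_injOn hz hz_inj).trans
    (encard_criticalPoints_warrenPerturbation_le f hε)
  rw [Set.encard_coe_eq_coe_finsetCard] at hle
  exact_mod_cast hle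

/-- The cardinality is an `encard`, so finiteness is part of the claim; `Set.ncard` would give the
junk value `0` to an infinite set of components. -/
theorem warren_connected_components_bound_general (f : MvPolynomial σ ℝ) :
    Set.encard {A : Set (σ → ℝ) | ∃ x : σ → ℝ, eval x f ≠ 0 ∧
        A = connectedComponentIn {y : σ → ℝ | eval y f ≠ 0} x} ≤
      ((2 * f.totalDegree + 1) ^ Fintype.card σ : ℕ) := by
  have himage : {A : Set (σ → ℝ) | ∃ x : σ → ℝ, eval x f ≠ 0 ∧
      A = connectedComponentIn {y | eval y f ≠ 0} x} =
      connectedComponentIn {y | eval y f ≠ 0} '' {x | eval x f ≠ 0} := by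
    simp only [Set.image, Set.mem_ofPred_eq, eq_comm]
  obtain ⟨T, hT, hbij⟩ := Set.exists_subset_bijOn {x | eval x f ≠ 0}
    (connectedComponentIn {y | eval y f ≠ 0})
  rw [himage, ← hbij.image_eq, hbij.injOn.encard_image]
  exact encard_le_of_forall_finset_card_le fun P hP ↦
    card_le_of_injOn_connectedComponentIn f (fun x hx ↦ hT (hP hx)) (hbij.injOn.mono hP)

end Components

/-- **Warren's bound.** For every `d ≥ 1` there is a constant `C_d` such that for every nonzero
`d`-variate real polynomial `f` of degree at most `D ≥ 1`, the number of connected components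
of `ℝ^d \ Z(f)` is at most `C_d·D^d`. -/
theorem warren_connected_components_bound (d : ℕ) (hd : 1 ≤ d) :
    ∃ C : ℝ, 0 < C ∧
      ∀ (f : MvPolynomial (Fin d) ℝ) (D : ℕ), 1 ≤ D → f ≠ 0 → f.totalDegree ≤ D →
        (Set.ncard {A : Set (Fin d → ℝ) | ∃ x : Fin d → ℝ, eval x f ≠ 0 ∧
            A = connectedComponentIn {y : Fin d → ℝ | eval y f ≠ 0} x} : ℝ)
          ≤ C * (D : ℝ) ^ d := by
  refine ⟨3 ^ d, by positivity, fun f D hD _ hf ↦ ?_⟩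
  have hcard := ENat.toNat_le_of_le_natCast (warren_connected_components_bound_general f)
  have hdegree : (2 * f.totalDegree + 1) ^ Fintype.card (Fin d) ≤ 3 ^ d * D ^ d := by
    rw [Fintype.card_fin, ← mul_pow]
    gcongr
    lia
  exact_mod_cast hcard.trans hdegree
end
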